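/- Let 𝔤 be a finite-dimensional simple Lie algebra over ℂ, (π₁,v₁),…,(πₙ,vₙ) finite-dimensional cyclic 𝔤-modules, and Z a tuple of pairwise distinct complex numbers. Then the associated graded space ⊕_{i≥0} Fⁱ_Z/Fⁱ⁻¹_Z, with 𝔤 acting on each graded piece via the maps induced by the elements 1⊗x (each of which preserves every Fⁱ_Z), is isomorphic as a 𝔤-module to π₁⊗⋯⊗πₙ with the diagonal 𝔤-action. -/

import Mathlib

open scoped TensorProduct
open PiTensorProduct

namespace Fusion

variable {L : Type} {ι : Type} [Fintype ι] [DecidableEq ι]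
variable (π : ι → Type) [∀ i, AddCommGroup (π i)] [∀ i, Module ℂ (π i)]

/-- Apply the endomorphism `g` in the `i`-th slot of the tensor product. -/
noncomputable def slotE (i : ι) (g : Module.End ℂ (π i)) :
    Module.End ℂ (⨂[ℂ] j, π j) :=
  PiTensorProduct.map (Function.update (fun j => (LinearMap.id : π j →ₗ[ℂ] π j)) i g)

variable (ρ : ∀ i, L → Module.End ℂ (π i))

/-- The action of `t^k ⊗ x` on the evaluation tensor product `Π(Z)`. -/
noncomputable def monAct (z : ι → ℂ) (k : ℕ) (x : L) :
    Module.End ℂ (⨂[ℂ] j, π j) :=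
  ∑ i, (z i) ^ k • slotE π i (ρ i x)

/-- The action of `p ⊗ x` on the evaluation tensor product `Π(Z)`. -/
noncomputable def polyAct (z : ι → ℂ) (p : Polynomial ℂ) (x : L) :
    Module.End ℂ (⨂[ℂ] j, π j) :=
  ∑ i, p.eval (z i) • slotE π i (ρ i x)

variable (v : ∀ i, π i)

/-- `IsWord π ρ v z u d` : `u` is obtained from `v₁ ⊗ ⋯ ⊗ vₙ` by applying a monomial
`(t^{k₁}⊗x₁)⋯(t^{k_m}⊗x_m)` of total degree `d = k₁ + ⋯ + k_m` in `Π(Z)`. -/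
inductive IsWord (z : ι → ℂ) : (⨂[ℂ] j, π j) → ℕ → Prop
  | base : IsWord z (tprod ℂ v) 0
  | step (x : L) (k : ℕ) {u : ⨂[ℂ] j, π j} {d : ℕ} :
      IsWord z u d → IsWord z (monAct π ρ z k x u) (d + k)

/-- The filtration `Fⁱ_Z` on the tensor product. -/
noncomputable def F (z : ι → ℂ) (i : ℕ) : Submodule ℂ (⨂[ℂ] j, π j) :=
  Submodule.span ℂ {u | ∃ d ≤ i, IsWord π ρ v z u d}

lemma F_mono (z : ι → ℂ) {i j : ℕ} (h : i ≤ j) : F π ρ v z i ≤ F π ρ v z j :=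
  Submodule.span_mono (fun u ⟨d, hd, hw⟩ => ⟨d, hd.trans h, hw⟩)

lemma monAct_mem_F {z : ι → ℂ} (k : ℕ) (x : L) {i : ℕ} {u : ⨂[ℂ] j, π j}
    (hu : u ∈ F π ρ v z i) : monAct π ρ z k x u ∈ F π ρ v z (i + k) := by
  have : Submodule.map (monAct π ρ z k x) (F π ρ v z i) ≤ F π ρ v z (i + k) := by
    rw [F, Submodule.map_span]
    refine Submodule.span_le.2 ?_
    rintro _ ⟨u, ⟨d, hd, hw⟩, rfl⟩
    exact Submodule.subset_span ⟨d + k, by omega, hw.step x k⟩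
  exact this ⟨u, hu, rfl⟩

/-- `Fprev π ρ v z i` is `F^{i-1}`, with `F^{-1} = 0`. -/
noncomputable def Fprev (z : ι → ℂ) : ℕ → Submodule ℂ (⨂[ℂ] j, π j)
  | 0 => ⊥
  | (i + 1) => F π ρ v z i

lemma monAct_mem_Fprev {z : ι → ℂ} (k : ℕ) (x : L) {i : ℕ} {u : ⨂[ℂ] j, π j}
    (hu : u ∈ Fprev π ρ v z i) : monAct π ρ z k x u ∈ Fprev π ρ v z (i + k) := by
  cases i with
  | zero =>
      rw [Fprev, Submodule.mem_bot] at hu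
      subst hu
      simpa using (Fprev π ρ v z (0 + k)).zero_mem
  | succ i =>
      have : monAct π ρ z k x u ∈ F π ρ v z (i + k) := monAct_mem_F π ρ v k x hu
      have he : Fprev π ρ v z (i + 1 + k) = F π ρ v z (i + k) := by
        rw [show i + 1 + k = (i + k) + 1 by omega]; rfl
      rwa [he]

/-- The `i`-th graded piece `grⁱ_Z = Fⁱ_Z / F^{i-1}_Z` of the fusion product. -/
noncomputable abbrev gr (z : ι → ℂ) (i : ℕ) : Type :=
  ↥(F π ρ v z i) ⧸ (Fprev π ρ v z i).comap (F π ρ v z i).subtype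

/-- The map `grⁱ_Z → gr^{i+k}_Z` induced by the action of `t^k ⊗ x`. -/
noncomputable def grMap (z : ι → ℂ) (k : ℕ) (x : L) (i : ℕ) :
    gr π ρ v z i →ₗ[ℂ] gr π ρ v z (i + k) :=
  Submodule.mapQ _ _
    ((monAct π ρ z k x).restrict (fun u hu => monAct_mem_F π ρ v k x hu))
    (fun u hu => monAct_mem_Fprev π ρ v k x hu)

/-- The class of `v₁ ⊗ ⋯ ⊗ vₙ` in `gr⁰_Z`. -/
noncomputable def vbar (z : ι → ℂ) : gr π ρ v z 0 :=
  Submodule.Quotient.mk ⟨tprod ℂ v, Submodule.subset_span ⟨0, le_refl 0, IsWord.base⟩⟩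

end Fusion

/-!
By Weyl's theorem every `Fⁱ⁻¹` has a `𝔤`-stable complement `Cᵢ` in the tensor product. Then
`Cᵢ ∩ Fⁱ` maps isomorphically and equivariantly onto `Fⁱ/Fⁱ⁻¹`, and by modularity the `Cᵢ ∩ Fⁱ`
form an internal direct sum with total `⋃ Fⁱ`. This union is stable under all `t^k ⊗ x`, hence under
all `p ⊗ x`; taking for `p` the Lagrange basis polynomials at the distinct points `zᵢ` it is stable
under the action of `𝔤` on each single tensor factor, and cyclicity of the `vᵢ`, one factor after
the other, shows that it contains every pure tensor.

Weyl's theorem follows from `H¹(𝔤, M) = 0`, applied to the linear maps `M → N` vanishing on a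
submodule `N`. The vanishing reduces to irreducible `M`. There the kernel of the trace form acts by
zero and is complemented by an ideal on which the form is nondegenerate. If this ideal is zero, `𝔤`
acts trivially and cocycles vanish because `𝔤` is perfect; otherwise its Casimir operator has
nonzero trace, is therefore invertible by Schur's lemma, and turns cocycles into coboundaries.
-/

namespace Fusion

section Casimir

variable {K L V ι : Type*} [Field K] [AddCommGroup V] [Module K V] [Fintype ι] [DecidableEq ι]

/-- The Casimir tensor of a nondegenerate bilinear form `B` on a Lie module `V`: the element of
`V ⊗ V` corresponding to the identity of `V` under the isomorphism `V ⊗ V ≃ V ⊗ V* = End V`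
induced by `B`, written out in a basis of `V` and its dual basis. -/
noncomputable def casimirTensor (B : LinearMap.BilinForm K V) (hB : B.Nondegenerate)
    (b : Module.Basis ι K V) : V ⊗[K] V :=
  ∑ i, b i ⊗ₜ[K] B.dualBasis hB b i

lemma sum_apply_smul_dualBasis {B : LinearMap.BilinForm K V} (hB : B.Nondegenerate)
    (b : Module.Basis ι K V) (y : V) : ∑ j, B y (b j) • B.dualBasis hB b j = y := by
  simp_rw [← LinearMap.BilinForm.dualBasis_repr_apply hB, Module.Basis.sum_repr]

variable [LieRing L] [LieAlgebra K L] [LieRingModule L V] [LieModule K L V]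

lemma lie_casimirTensor {B : LinearMap.BilinForm K V} (hB : B.Nondegenerate) (hs : B.IsSymm)
    (hinv : B.lieInvariant L) (b : Module.Basis ι K V) (x : L) :
    ⁅x, casimirTensor B hB b⁆ = 0 := by
  set c := B.dualBasis hB b with hc
  have lie_c (i : ι) : ⁅x, c i⁆ = ∑ j, B ⁅x, c i⁆ (b j) • c j :=
    (sum_apply_smul_dualBasis hB b _).symm
  have lie_b (i : ι) : ⁅x, b i⁆ = ∑ j, B ⁅x, b i⁆ (c j) • b j := by
    simpa only [hc, LinearMap.BilinForm.dualBasis_dualBasis hB hs] using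
      (sum_apply_smul_dualBasis hB c ⁅x, b i⁆).symm
  have coeff (i j : ι) : B ⁅x, b j⁆ (c i) = -B ⁅x, c i⁆ (b j) := by
    rw [hinv, hs.eq]
  calc ⁅x, casimirTensor B hB b⁆
      = ∑ i, (⁅x, b i⁆ ⊗ₜ[K] c i + b i ⊗ₜ[K] ⁅x, c i⁆) := by
        simp only [casimirTensor, lie_sum, TensorProduct.LieModule.lie_tmul_right, hc]
    _ = ∑ i, ∑ j, (B ⁅x, b j⁆ (c i) + B ⁅x, c i⁆ (b j)) • b i ⊗ₜ[K] c j := by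
        simp_rw [add_smul, Finset.sum_add_distrib]
        congr 1
        · rw [Finset.sum_comm]
          refine Finset.sum_congr rfl fun i _ ↦ ?_
          conv_lhs => rw [lie_b i]
          simp_rw [TensorProduct.sum_tmul, TensorProduct.smul_tmul']
        · refine Finset.sum_congr rfl fun i _ ↦ ?_
          conv_lhs => rw [lie_c i]
          simp_rw [TensorProduct.tmul_sum, TensorProduct.tmul_smul]
    _ = 0 := by simp only [coeff, neg_add_cancel, zero_smul, Finset.sum_const_zero]

end Casimir

section SemisimpleIdeals

variable {K L : Type*} [Field K] [LieRing L] [LieAlgebra K L] [LieAlgebra.IsSemisimple K L]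

open LieAlgebra

lemma lieIdeal_lie_eq_inf (I J : LieIdeal K L) : ⁅I, J⁆ = I ⊓ J := by
  obtain ⟨C, hC⟩ := exists_isCompl ⁅I, J⁆
  have abelian : IsLieAbelian (I ⊓ J ⊓ C : LieIdeal K L) := by
    refine (LieSubmodule.lie_abelian_iff_lie_self_eq_bot _).2 (eq_bot_iff.2 ?_)
    rw [← hC.inf_eq_bot]
    exact le_inf (LieSubmodule.mono_lie (inf_le_left.trans inf_le_left)
      (inf_le_left.trans inf_le_right)) ((LieSubmodule.lie_le_right _ _).trans inf_le_right)
  have disjoint : Disjoint (I ⊓ J) C :=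
    disjoint_iff.2 (HasTrivialRadical.eq_bot_of_isSolvable (I ⊓ J ⊓ C))
  exact (LieSubmodule.lie_le_inf I J).antisymm (disjoint.le_of_codisjoint hC.symm.codisjoint)

lemma derivedSeries_lieIdeal_one_eq_top (I : LieIdeal K L) : derivedSeries K I 1 = ⊤ := by
  rw [LieIdeal.derivedSeries_eq_derivedSeriesOfIdeal_comap, derivedSeriesOfIdeal_succ,
    derivedSeriesOfIdeal_zero, lieIdeal_lie_eq_inf, inf_idem, LieIdeal.comap_incl_self]

end SemisimpleIdeals

section Irreducible

variable {R L M N : Type*} [CommRing R] [LieRing L]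
  [AddCommGroup M] [Module R M] [LieRingModule L M] [LieModule.IsIrreducible R L M]

lemma injective_of_ne_zero [AddCommGroup N] [Module R N] [LieRingModule L N]
    {g : M →ₗ⁅R,L⁆ N} (hg : g ≠ 0) : Function.Injective g := by
  refine g.ker_eq_bot.1 ((IsSimpleOrder.eq_bot_or_eq_top g.ker).resolve_right fun h ↦ hg ?_)
  ext m
  exact LieModuleHom.mem_ker.1 (h ▸ LieSubmodule.mem_top m)

lemma lie_top_eq_bot_of_isNilpotent [LieAlgebra R L] [LieModule R L M] (I : LieIdeal R L)
    [LieModule.IsNilpotent I M] : ⁅I, (⊤ : LieSubmodule R L M)⁆ = ⊥ := by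
  refine (IsSimpleOrder.eq_bot_or_eq_top _).resolve_right fun h ↦ ?_
  have lcs_eq_top (k : ℕ) : I.lcs M k = ⊤ := by
    induction k with
    | zero => rfl
    | succ k ih => rw [LieIdeal.lcs_succ, ih, h]
  obtain ⟨k, hk⟩ := LieModule.IsNilpotent.nilpotent R I M
  refine top_ne_bot (α := LieSubmodule R L M) ?_
  rw [← lcs_eq_top k, ← LieSubmodule.toSubmodule_inj, LieIdeal.coe_lcs_eq, hk,
    LieSubmodule.bot_toSubmodule, LieSubmodule.bot_toSubmodule]

end Irreducible

section TraceForm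

variable {K L M : Type*} [Field K] [LieRing L] [LieAlgebra K L]
  [AddCommGroup M] [Module K M] [LieRingModule L M] [LieModule K L M] [FiniteDimensional K M]

open LieModule

lemma finiteDimensional_of_nondegenerate_traceForm (h : (traceForm K L M).Nondegenerate) :
    FiniteDimensional K L := by
  refine Module.Finite.of_injective (toEnd K L M : L →ₗ[K] Module.End K M) ?_
  refine (injective_iff_map_eq_zero _).2 fun x hx ↦ h.1 x fun y ↦ ?_
  have : toEnd K L M x = 0 := hx
  rw [traceForm_apply_apply, this, LinearMap.zero_comp, map_zero]

variable [CharZero K] [LieAlgebra.IsSemisimple K L]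

lemma lie_top_eq_bot_of_traceForm_eq_zero [IsIrreducible K L M] (I : LieIdeal K L)
    (h : traceForm K I M = 0) : ⁅I, (⊤ : LieSubmodule K L M)⁆ = ⊥ := by
  have nilpotent := isNilpotent_derivedSeries_of_traceForm_eq_zero h
  rw [derivedSeries_lieIdeal_one_eq_top] at nilpotent
  have : LieModule.IsNilpotent I M := (isNilpotent_iff_forall' (R := K)).2 fun x ↦
    (isNilpotent_iff_forall' (R := K)).1 nilpotent ⟨x, LieSubmodule.mem_top x⟩
  exact lie_top_eq_bot_of_isNilpotent I

variable (K L M) in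
lemma exists_isCompl_trivial_nondegenerate [IsIrreducible K L M] :
    ∃ I J : LieIdeal K L, IsCompl I J ∧ ⁅I, (⊤ : LieSubmodule K L M)⁆ = ⊥ ∧
      (traceForm K J M).Nondegenerate := by
  let I : LieIdeal K L := LieAlgebra.InvariantForm.orthogonal (traceForm K L M)
    (traceForm_lieInvariant K L M) ⊤
  have mem_I (x : L) : x ∈ I ↔ ∀ y, traceForm K L M x y = 0 := by
    rw [LieAlgebra.InvariantForm.mem_orthogonal]
    simp only [LieSubmodule.mem_top, forall_const, traceForm_comm K L M x]
  have I_eq_ker : I.toSubmodule = LinearMap.ker (traceForm K L M) := by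
    ext x
    rw [LieSubmodule.mem_toSubmodule, mem_I, LinearMap.mem_ker, LinearMap.ext_iff]
    rfl
  obtain ⟨J, hIJ⟩ := exists_isCompl I
  refine ⟨I, J, hIJ, lie_top_eq_bot_of_traceForm_eq_zero I ?_, ?_⟩
  · ext x y
    exact (mem_I x).1 x.2 y
  · refine (traceForm_isSymm K L M).nondegenerate_restrict_of_isCompl_ker ?_
    rw [← I_eq_ker]
    exact (LieSubmodule.isCompl_toSubmodule.2 hIJ).symm

end TraceForm

section Cohomology

variable {R L M : Type*} [CommRing R] [LieRing L] [LieAlgebra R L]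
  [AddCommGroup M] [Module R M] [LieRingModule L M] [LieModule R L M]

open LieModule LieModule.Cohomology

variable (R L M) in
/-- The vanishing of the first cohomology group `H¹(L, M)` of a Lie algebra `L` with coefficients
in the Lie module `M`: every cocycle `f` is the coboundary `x ↦ ⁅x, m⁆` of some `m : M`. -/
def FirstCohomologyVanishes : Prop :=
  ∀ f : oneCochain R L M, d₁₂ R L M f = 0 → ∃ m : M, ∀ x : L, f x = ⁅x, m⁆

lemma d₁₂_eq_zero_iff {f : oneCochain R L M} :
    d₁₂ R L M f = 0 ↔ ∀ x y, f ⁅x, y⁆ = ⁅x, f y⁆ - ⁅y, f x⁆ := by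
  rw [DFunLike.ext_iff]
  refine forall_congr' fun x ↦ LinearMap.ext_iff.trans (forall_congr' fun y ↦ ?_)
  rw [d₁₂_apply_apply]
  exact sub_eq_zero.trans eq_comm

lemma firstCohomologyVanishes_of_isTrivial [IsTrivial L M]
    (perfect : ⁅(⊤ : LieIdeal R L), (⊤ : LieIdeal R L)⁆ = ⊤) : FirstCohomologyVanishes R L M := by
  refine fun f hf ↦ ⟨0, fun x ↦ ?_⟩
  have lie_top_le_ker : (⁅(⊤ : LieIdeal R L), (⊤ : LieIdeal R L)⁆ : LieIdeal R L).toSubmodule ≤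
      LinearMap.ker f := by
    rw [LieSubmodule.lieIdeal_oper_eq_linear_span', Submodule.span_le]
    rintro _ ⟨x, -, y, -, rfl⟩
    simp only [SetLike.mem_coe, LinearMap.mem_ker, d₁₂_eq_zero_iff.1 hf, trivial_lie_zero, sub_self]
  rw [perfect] at lie_top_le_ker
  rw [lie_zero]
  exact lie_top_le_ker (LieSubmodule.mem_top x)

lemma FirstCohomologyVanishes.of_lieSubmodule_of_quotient (N : LieSubmodule R L M)
    (hN : FirstCohomologyVanishes R L N) (hQ : FirstCohomologyVanishes R L (M ⧸ N)) :
    FirstCohomologyVanishes R L M := by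
  intro f hf
  rw [d₁₂_eq_zero_iff] at hf
  let q : M →ₗ⁅R,L⁆ M ⧸ N := LieSubmodule.Quotient.mk' N
  obtain ⟨m', hm'⟩ := hQ ((q : M →ₗ[R] M ⧸ N) ∘ₗ f) <| d₁₂_eq_zero_iff.2 fun x y ↦ by
    simp only [LinearMap.comp_apply, LieModuleHom.coe_toLinearMap, hf, map_sub,
      LieModuleHom.map_lie]
  obtain ⟨m, rfl⟩ := LieSubmodule.Quotient.surjective_mk' N m'
  have sub_mem (x : L) : f x - ⁅x, m⁆ ∈ N := by
    rw [← LieSubmodule.Quotient.mk_eq_zero, map_sub, LieModuleHom.map_lie, sub_eq_zero]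
    exact hm' x
  let g : oneCochain R L N :=
    (f - (toEnd R L M : L →ₗ[R] Module.End R M).flip m).codRestrict N.toSubmodule sub_mem
  have g_apply (x : L) : (g x : M) = f x - ⁅x, m⁆ := rfl
  obtain ⟨n, hn⟩ := hN g <| d₁₂_eq_zero_iff.2 fun x y ↦ by
    ext
    simp only [g_apply, AddSubgroupClass.coe_sub, LieSubmodule.coe_bracket, hf, lie_sub, lie_lie]
    abel
  refine ⟨m + n, fun x ↦ ?_⟩
  rw [lie_add, ← LieSubmodule.coe_bracket, ← hn, g_apply, add_sub_cancel]

end Cohomology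

section InvariantTensors

variable {R L M : Type*} [CommRing R] [LieRing L] [LieAlgebra R L]
  [AddCommGroup M] [Module R M] [LieRingModule L M] [LieModule R L M]

open LieModule LieModule.Cohomology

variable (M) in
/-- The operator `∑ xᵢ yᵢ` on a Lie module given by a tensor `∑ xᵢ ⊗ yᵢ` with entries in an ideal.
It is the Casimir operator when applied to a Casimir tensor. -/
noncomputable def tensorOperator (J : LieIdeal R L) : J ⊗[R] J →ₗ[R] Module.End R M :=
  LinearMap.mul' R (Module.End R M) ∘ₗ
    TensorProduct.map (toEnd R J M : J →ₗ[R] _) (toEnd R J M : J →ₗ[R] _)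

lemma tensorOperator_tmul_apply (J : LieIdeal R L) (a b : J) (m : M) :
    tensorOperator M J (a ⊗ₜ b) m = ⁅(a : L), ⁅(b : L), m⁆⁆ := rfl

lemma lie_tensorOperator (J : LieIdeal R L) (x : L) (t : J ⊗[R] J) :
    ⁅x, tensorOperator M J t⁆ = tensorOperator M J ⁅x, t⁆ := by
  induction t with
  | zero => simp only [map_zero, lie_zero]
  | add s t hs ht => simp only [map_add, lie_add, hs, ht]
  | tmul a b =>
    ext m
    simp only [TensorProduct.LieModule.lie_tmul_right, map_add, LinearMap.add_apply,
      tensorOperator_tmul_apply, LieHom.lie_apply, LieSubmodule.coe_bracket, lie_lie, lie_sub]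
    abel

/-- The vector `∑ xᵢ · f yᵢ` for a tensor `∑ xᵢ ⊗ yᵢ`. Its coboundary for a cocycle `f` and a
Casimir tensor is `f` followed by the Casimir operator. -/
noncomputable def tensorContraction (J : LieIdeal R L) (f : oneCochain R L M) : J ⊗[R] J →ₗ[R] M :=
  TensorProduct.lift
    ((toEnd R J M : J →ₗ[R] Module.End R M).compl₂ (f ∘ₗ J.toSubmodule.subtype))

lemma tensorContraction_tmul (J : LieIdeal R L) (f : oneCochain R L M) (a b : J) :
    tensorContraction J f (a ⊗ₜ b) = ⁅(a : L), f b⁆ := rfl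

lemma lie_tensorContraction (J : LieIdeal R L) {f : oneCochain R L M} (hf : d₁₂ R L M f = 0)
    (x : L) (t : J ⊗[R] J) :
    ⁅x, tensorContraction J f t⁆ = tensorContraction J f ⁅x, t⁆ + tensorOperator M J t (f x) := by
  induction t with
  | zero => simp only [map_zero, lie_zero, LinearMap.zero_apply, add_zero]
  | add s t hs ht =>
    simp only [map_add, lie_add, hs, ht, LinearMap.add_apply]
    abel
  | tmul a b =>
    simp only [TensorProduct.LieModule.lie_tmul_right, map_add, tensorContraction_tmul,
      tensorOperator_tmul_apply, LieSubmodule.coe_bracket, lie_lie, lie_sub,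
      d₁₂_eq_zero_iff.1 hf]
    abel

lemma firstCohomologyVanishes_of_bijective_tensorOperator {J : LieIdeal R L} {t : J ⊗[R] J}
    (ht : ∀ x : L, ⁅x, t⁆ = 0) (hbij : Function.Bijective (tensorOperator M J t)) :
    FirstCohomologyVanishes R L M := by
  intro f hf
  obtain ⟨m, hm⟩ := hbij.surjective (tensorContraction J f t)
  refine ⟨m, fun x ↦ hbij.injective ?_⟩
  have comm : ⁅x, tensorOperator M J t m⁆ = tensorOperator M J t ⁅x, m⁆ := by
    rw [← sub_eq_zero, ← LieHom.lie_apply, lie_tensorOperator, ht, map_zero, LinearMap.zero_apply]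
  rw [← comm, hm, lie_tensorContraction J hf, ht, map_zero, zero_add]

end InvariantTensors

section Whitehead

variable {K L M : Type*} [Field K] [LieRing L] [LieAlgebra K L]
  [AddCommGroup M] [Module K M] [LieRingModule L M] [LieModule K L M]

open LieModule

lemma trace_tensorOperator_casimirTensor {ι : Type*} [Fintype ι] [DecidableEq ι]
    {J : LieIdeal K L} (h : (traceForm K J M).Nondegenerate) (b : Module.Basis ι K J) :
    LinearMap.trace K M (tensorOperator M J (casimirTensor (traceForm K J M) h b)) =
      Module.finrank K J := by
  have trace_tmul (a b : J) :
    LinearMap.trace K M (tensorOperator M J (a ⊗ₜ b)) = traceForm K J M a b := rfl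
  simp only [casimirTensor, map_sum, trace_tmul, if_true, Finset.sum_const, Finset.card_univ,
    LinearMap.BilinForm.apply_dualBasis_right h ⟨traceForm_comm K J M⟩, nsmul_one,
    Module.finrank_eq_card_basis b]

variable [CharZero K] [LieAlgebra.IsSemisimple K L] [FiniteDimensional K M]

lemma firstCohomologyVanishes_of_isIrreducible [IsIrreducible K L M] :
    FirstCohomologyVanishes K L M := by
  obtain ⟨I, J, hIJ, hI, hJ⟩ := exists_isCompl_trivial_nondegenerate K L M
  rcases eq_or_ne J ⊥ with rfl | J_ne_bot
  · rw [eq_top_of_isCompl_bot hIJ] at hI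
    have : IsTrivial L M := (trivial_iff_lower_central_eq_bot K L M).2 hI
    exact firstCohomologyVanishes_of_isTrivial ((lieIdeal_lie_eq_inf ⊤ ⊤).trans (inf_idem ⊤))
  have : FiniteDimensional K J := finiteDimensional_of_nondegenerate_traceForm hJ
  let t := casimirTensor (traceForm K J M) hJ (Module.finBasis K J)
  have lie_t (x : L) : ⁅x, t⁆ = 0 :=
    lie_casimirTensor hJ ⟨traceForm_comm K J M⟩
      (fun x y z ↦ traceForm_lieInvariant K L M x y z) _ x
  let C : M →ₗ⁅K,L⁆ M := maxTrivLinearMapEquivLieModuleHom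
    ⟨tensorOperator M J t, fun x ↦ by rw [lie_tensorOperator, lie_t, map_zero]⟩
  have C_ne_zero : C ≠ 0 := fun hC ↦ by
    have : Nontrivial J := (LieSubmodule.nontrivial_iff_ne_bot K L L).2 J_ne_bot
    have operator_eq_zero : tensorOperator M J t = 0 := congrArg LieModuleHom.toLinearMap hC
    refine Module.finrank_pos (R := K) (M := J).ne' (Nat.cast_injective (R := K) ?_)
    rw [← trace_tensorOperator_casimirTensor hJ (Module.finBasis K J), operator_eq_zero, map_zero,
      Nat.cast_zero]
  have C_injective : Function.Injective C := injective_of_ne_zero C_ne_zero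
  exact firstCohomologyVanishes_of_bijective_tensorOperator lie_t
    ⟨C_injective, LinearMap.surjective_of_injective (f := tensorOperator M J t) C_injective⟩

variable (K L M) in
theorem firstCohomologyVanishes : FirstCohomologyVanishes K L M := by
  induction hd : Module.finrank K M using Nat.strong_induction_on generalizing M with
  | _ d ih =>
  rcases subsingleton_or_nontrivial M with _ | _
  · exact fun f _ ↦ ⟨0, fun x ↦ Subsingleton.elim _ _⟩
  by_cases irreducible : ∀ N : LieSubmodule K L M, N ≠ ⊥ → N = ⊤
  · have := IsIrreducible.mk irreducible
    exact firstCohomologyVanishes_of_isIrreducible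
  push Not at irreducible
  obtain ⟨N, N_ne_bot, N_ne_top⟩ := irreducible
  have : FiniteDimensional K (M ⧸ N) := inferInstanceAs (FiniteDimensional K (M ⧸ N.toSubmodule))
  have : Nontrivial N := (LieSubmodule.nontrivial_iff_ne_bot K L M).2 N_ne_bot
  have finrank_pos : 0 < Module.finrank K N := Module.finrank_pos
  have finrank_lt : Module.finrank K N < d :=
    hd ▸ Submodule.finrank_lt (mt N.toSubmodule_eq_top.1 N_ne_top)
  have finrank_add : Module.finrank K (M ⧸ N) + Module.finrank K N = d :=
    hd ▸ Submodule.finrank_quotient_add_finrank N.toSubmodule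
  exact .of_lieSubmodule_of_quotient N (ih _ finrank_lt N rfl) (ih _ (by omega) (M ⧸ N) rfl)

end Whitehead

section Complements

variable {R L M : Type*} [CommRing R] [LieRing L] [LieAlgebra R L]
  [AddCommGroup M] [Module R M] [LieRingModule L M] [LieModule R L M]

open LieModule

lemma FirstCohomologyVanishes.exists_mem_lie_eq {W : LieSubmodule R L M}
    (hW : FirstCohomologyVanishes R L W) {u : M} (hu : ∀ x : L, ⁅x, u⁆ ∈ W) :
    ∃ w ∈ W, ∀ x : L, ⁅x, w⁆ = ⁅x, u⁆ := by
  obtain ⟨w, hw⟩ := hW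
    (((toEnd R L M : L →ₗ[R] Module.End R M).flip u).codRestrict W.toSubmodule hu) <|
    d₁₂_eq_zero_iff.2 fun x y ↦ Subtype.ext (lie_lie x y u)
  exact ⟨w, w.2, fun x ↦ (congrArg Subtype.val (hw x)).symm⟩

/-- The linear maps `M → N` vanishing on `N`, among them the differences of two projections of `M`
onto `N`. -/
def mapsVanishingOn (N : LieSubmodule R L M) : LieSubmodule R L (M →ₗ[R] N) where
  carrier := {A | ∀ n ∈ N, A n = 0}
  zero_mem' := fun _ _ ↦ rfl
  add_mem' := fun hA hB n hn ↦ by rw [LinearMap.add_apply, hA n hn, hB n hn, add_zero]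
  smul_mem' := fun c A hA n hn ↦ by rw [LinearMap.smul_apply, hA n hn, smul_zero]
  lie_mem := fun {x A} hA n hn ↦ by
    rw [LieHom.lie_apply, hA n hn, hA _ (N.lie_mem hn), lie_zero, sub_zero]

end Complements

section CompleteReducibility

variable {K L M : Type*} [Field K] [CharZero K] [LieRing L] [LieAlgebra K L]
  [LieAlgebra.IsSemisimple K L] [AddCommGroup M] [Module K M] [LieRingModule L M]
  [LieModule K L M] [FiniteDimensional K M]

open LieModule

lemma exists_lieModuleHom_leftInverse (N : LieSubmodule K L M) :
    ∃ p : M →ₗ⁅K,L⁆ N, ∀ n : N, p n = n := by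
  obtain ⟨p₀, hp₀⟩ : ∃ p₀ : M →ₗ[K] N, p₀ ∘ₗ N.toSubmodule.subtype = LinearMap.id :=
    LinearMap.exists_leftInverse_of_injective _ N.toSubmodule.ker_subtype
  have p₀_apply {n : M} (hn : n ∈ N) : p₀ n = ⟨n, hn⟩ := DFunLike.congr_fun hp₀ (⟨n, hn⟩ : N)
  obtain ⟨w, hw, lie_w⟩ := (firstCohomologyVanishes K L (mapsVanishingOn N)).exists_mem_lie_eq
    (u := p₀) fun x n hn ↦ by
      rw [LieHom.lie_apply, p₀_apply hn, p₀_apply (N.lie_mem hn), sub_eq_zero]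
      rfl
  refine ⟨maxTrivLinearMapEquivLieModuleHom ⟨p₀ - w, fun x ↦ ?_⟩, fun n ↦ ?_⟩
  · rw [lie_sub, lie_w, sub_self]
  · change p₀ n - w n = n
    rw [hw n n.2, sub_zero, p₀_apply n.2]

instance complementedLattice_lieSubmodule : ComplementedLattice (LieSubmodule K L M) where
  exists_isCompl N := by
    obtain ⟨p, hp⟩ := exists_lieModuleHom_leftInverse N
    refine ⟨p.ker, LieSubmodule.isCompl_toSubmodule.1 ?_⟩
    exact LinearMap.isCompl_of_proj (f := (p : M →ₗ[K] N)) hp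

end CompleteReducibility

section LatticeFiltration

variable {α : Type*}

lemma sup_range_eq [SemilatticeSup α] [OrderBot α] {G D : ℕ → α} (zero : G 0 = ⊥)
    (succ : ∀ n, G n ⊔ D n = G (n + 1)) (n : ℕ) : (Finset.range n).sup D = G n := by
  induction n with
  | zero => rw [Finset.range_zero, Finset.sup_empty, zero]
  | succ n ih => rw [Finset.range_add_one, Finset.sup_insert, ih, sup_comm, succ]

lemma supIndep_range [Lattice α] [OrderBot α] [IsModularLattice α] {G D : ℕ → α}
    (zero : G 0 = ⊥) (succ : ∀ n, G n ⊔ D n = G (n + 1)) (disjoint : ∀ n, Disjoint (G n) (D n))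
    (n : ℕ) : (Finset.range n).SupIndep D := by
  induction n with
  | zero => exact Finset.supIndep_empty D
  | succ n ih =>
    rw [Finset.range_add_one]
    refine ih.insert ?_
    rw [sup_range_eq zero succ]
    exact (disjoint n).symm

lemma iSupIndep_of_disjoint [CompleteLattice α] [IsModularLattice α] [IsCompactlyGenerated α]
    {G D : ℕ → α} (zero : G 0 = ⊥) (succ : ∀ n, G n ⊔ D n = G (n + 1))
    (disjoint : ∀ n, Disjoint (G n) (D n)) : iSupIndep D := by
  refine iSupIndep_iff_supIndep.2 fun s ↦ ?_
  obtain ⟨n, hn⟩ := s.exists_nat_subset_range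
  exact (supIndep_range zero succ disjoint n).subset hn

lemma iSup_le_iSup_of_sup_eq [CompleteLattice α] {G D : ℕ → α} (zero : G 0 = ⊥)
    (succ : ∀ n, G n ⊔ D n = G (n + 1)) : ⨆ n, G n ≤ ⨆ n, D n :=
  iSup_le fun n ↦ sup_range_eq zero succ n ▸ Finset.sup_le fun i _ ↦ le_iSup D i

end LatticeFiltration

section Splitting

open DirectSum

variable {R M : Type*} [Ring R] [AddCommGroup M] [Module R M] {G C : ℕ → Submodule R M}

lemma isInternal_inf_succ (mono : Monotone G) (zero : G 0 = ⊥) (top : ⨆ n, G n = ⊤)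
    (compl : ∀ n, IsCompl (G n) (C n)) : DirectSum.IsInternal fun n ↦ C n ⊓ G (n + 1) := by
  have succ (n : ℕ) : G n ⊔ C n ⊓ G (n + 1) = G (n + 1) := by
    rw [← sup_inf_assoc_of_le _ (mono n.le_succ), (compl n).sup_eq_top, top_inf_eq]
  exact isInternal_submodule_of_iSupIndep_of_iSup_eq_top
    (iSupIndep_of_disjoint zero succ fun n ↦ (compl n).disjoint.mono_right inf_le_left)
    (top_le_iff.1 (top ▸ iSup_le_iSup_of_sup_eq zero succ))

lemma exists_mk_eq_of_isCompl {p q r : Submodule R M} (compl : IsCompl p q) (le : p ≤ r)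
    (u : r ⧸ p.comap r.subtype) : ∃ c : r, (c : M) ∈ q ∧ Submodule.Quotient.mk c = u := by
  have compl_subtype := Submodule.isCompl_comap_subtype_of_isCompl_of_le compl le
  obtain ⟨c, rfl⟩ := (Submodule.quotientEquivOfIsCompl _ _ compl_subtype).symm.surjective u
  exact ⟨c, c.2, (Submodule.quotientEquivOfIsCompl_symm_apply _ _ compl_subtype c).symm⟩

lemma exists_linearEquiv_directSum_quotient (mono : Monotone G) (zero : G 0 = ⊥)
    (top : ⨆ n, G n = ⊤) (compl : ∀ n, IsCompl (G n) (C n)) :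
    ∃ φ : (⨁ n, G (n + 1) ⧸ (G n).comap (G (n + 1)).subtype) ≃ₗ[R] M,
      ∀ n (u : G (n + 1)), (u : M) ∈ C n → φ (lof R ℕ _ n (Submodule.Quotient.mk u)) = u := by
  let D (n : ℕ) := C n ⊓ G (n + 1)
  have compl_subtype (n : ℕ) :
      IsCompl ((G n).comap (G (n + 1)).subtype) ((D n).comap (G (n + 1)).subtype) := by
    rw [Submodule.comap_inf, Submodule.comap_subtype_self, inf_top_eq]
    exact Submodule.isCompl_comap_subtype_of_isCompl_of_le (compl n) (mono n.le_succ)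
  let e (n : ℕ) : (G (n + 1) ⧸ (G n).comap (G (n + 1)).subtype) ≃ₗ[R] D n :=
    Submodule.quotientEquivOfIsCompl _ _ (compl_subtype n) ≪≫ₗ
      Submodule.comapSubtypeEquivOfLe inf_le_right
  refine ⟨DFinsupp.mapRange.linearEquiv e ≪≫ₗ LinearEquiv.ofBijective (coeLinearMap D)
    (isInternal_inf_succ mono zero top compl), fun n u hu ↦ ?_⟩
  have e_mk : e n (Submodule.Quotient.mk u) = ⟨u, hu, u.2⟩ :=
    congrArg (Submodule.comapSubtypeEquivOfLe (inf_le_right : D n ≤ G (n + 1))) <|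
      Submodule.quotientEquivOfIsCompl_apply_mk_right (compl_subtype n) ⟨u, hu, u.2⟩
  calc _ = coeLinearMap D (DFinsupp.mapRange.linearMap (fun i ↦ (e i).toLinearMap)
        (DFinsupp.lsingle n (Submodule.Quotient.mk u))) := rfl
    _ = coeLinearMap D (lof R ℕ (fun n ↦ D n) n ⟨u, hu, u.2⟩) := by
      rw [DFinsupp.lsingle_apply, DFinsupp.mapRange.linearMap_apply, DFinsupp.mapRange_single]
      exact congrArg (fun d ↦ coeLinearMap D (lof R ℕ (fun n ↦ D n) n d)) e_mk
    _ = u := coeLinearMap_lof D n _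

theorem nonempty_lieModuleEquiv_directSum_quotient {R L M : Type*} [CommRing R] [LieRing L]
    [LieAlgebra R L] [AddCommGroup M] [Module R M] [LieRingModule L M] [LieModule R L M]
    [ComplementedLattice (LieSubmodule R L M)]
    {G : ℕ → LieSubmodule R L M} (mono : Monotone G) (zero : G 0 = ⊥) (top : ⨆ n, G n = ⊤) :
    Nonempty ((⨁ n, G (n + 1) ⧸ (G n).comap (G (n + 1)).incl) ≃ₗ⁅R,L⁆ M) := by
  choose C compl using fun n ↦ exists_isCompl (G n)
  obtain ⟨φ, hφ⟩ : ∃ φ : (⨁ n, G (n + 1) ⧸ (G n).comap (G (n + 1)).incl) ≃ₗ[R] M,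
      ∀ n (u : G (n + 1)), (u : M) ∈ C n →
        φ (lof R ℕ _ n (LieSubmodule.Quotient.mk u)) = u :=
    exists_linearEquiv_directSum_quotient (G := fun n ↦ (G n).toSubmodule)
      (C := fun n ↦ (C n).toSubmodule) mono (congrArg _ zero)
      (LieSubmodule.iSup_toSubmodule_eq_top.2 top)
      fun n ↦ LieSubmodule.isCompl_toSubmodule.2 (compl n)
  have map_lie_lof (x : L) (n : ℕ) (u : G (n + 1) ⧸ (G n).comap (G (n + 1)).incl) :
      φ ⁅x, lof R ℕ _ n u⁆ = ⁅x, φ (lof R ℕ _ n u)⁆ := by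
    obtain ⟨c, hc, rfl⟩ : ∃ c : G (n + 1), (c : M) ∈ C n ∧ LieSubmodule.Quotient.mk c = u :=
      exists_mk_eq_of_isCompl (LieSubmodule.isCompl_toSubmodule.2 (compl n)) (mono n.le_succ) u
    have lie_lof_mk : ⁅x, lof R ℕ (fun n ↦ G (n + 1) ⧸ (G n).comap (G (n + 1)).incl) n
        (LieSubmodule.Quotient.mk c)⁆ = lof R ℕ _ n (LieSubmodule.Quotient.mk ⁅x, c⁆) :=
      (LieModuleHom.map_lie (lieModuleOf R ℕ L _ n) x _).symm
    rw [lie_lof_mk, hφ n c hc, hφ n ⁅x, c⁆ ((C n).lie_mem hc), LieSubmodule.coe_bracket]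
  have map_lie (x : L) : φ.toLinearMap ∘ₗ LieModule.toEnd R L _ x =
      LieModule.toEnd R L M x ∘ₗ φ.toLinearMap :=
    linearMap_ext R fun n ↦ LinearMap.ext fun u ↦ map_lie_lof x n u
  exact ⟨{ φ with map_lie' := fun {x u} ↦ DFunLike.congr_fun (map_lie x) u }⟩

end Splitting

section Slots

variable {ι : Type} [DecidableEq ι]
  {π : ι → Type} [∀ i, AddCommGroup (π i)] [∀ i, Module ℂ (π i)]

variable (π) in
lemma slotE_eq_mapMonoidHom (i : ι) (g : Module.End ℂ (π i)) :
    slotE π i g = PiTensorProduct.mapMonoidHom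
      (Pi.mulSingle (M := fun j ↦ Module.End ℂ (π j)) i g) := rfl

lemma slotE_add (i : ι) (g h : Module.End ℂ (π i)) :
    slotE π i (g + h) = slotE π i g + slotE π i h :=
  PiTensorProduct.map_update_add _ i g h

lemma slotE_smul (i : ι) (c : ℂ) (g : Module.End ℂ (π i)) :
    slotE π i (c • g) = c • slotE π i g :=
  PiTensorProduct.map_update_smul _ i c g

lemma slotE_mul (i : ι) (g h : Module.End ℂ (π i)) :
    slotE π i (g * h) = slotE π i g * slotE π i h := by
  simp only [slotE_eq_mapMonoidHom, Pi.mulSingle_mul, map_mul]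

lemma commute_slotE {i j : ι} (hij : i ≠ j) (g : Module.End ℂ (π i)) (h : Module.End ℂ (π j)) :
    Commute (slotE π i g) (slotE π j h) := by
  simp only [slotE_eq_mapMonoidHom]
  exact (Pi.mulSingle_commute (f := fun j ↦ Module.End ℂ (π j)) hij g h).map _

lemma slotE_tprod (i : ι) (g : Module.End ℂ (π i)) (m : ∀ j, π j) :
    slotE π i g (tprod ℂ m) = tprod ℂ (Function.update m i (g (m i))) := by
  rw [slotE, PiTensorProduct.map_tprod]
  congr 1
  funext j
  rcases eq_or_ne j i with rfl | hji
  · simp only [Function.update_self]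
  · simp only [Function.update_of_ne hji, LinearMap.id_apply]

end Slots

section Diagonal

variable {ι : Type} [DecidableEq ι]
  {π : ι → Type} [∀ i, AddCommGroup (π i)] [∀ i, Module ℂ (π i)]
  {L : Type} [LieRing L] [LieAlgebra ℂ L] [∀ i, LieRingModule L (π i)] [∀ i, LieModule ℂ L (π i)]

open LieModule

lemma slotE_toEnd_mul (x y : L) (i j : ι) :
    slotE π i (toEnd ℂ L (π i) x) * slotE π j (toEnd ℂ L (π j) y) =
      (if i = j then slotE π i (toEnd ℂ L (π i) ⁅x, y⁆) else 0) +
        slotE π j (toEnd ℂ L (π j) y) * slotE π i (toEnd ℂ L (π i) x) := by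
  split_ifs with hij
  · subst hij
    rw [← slotE_mul, ← slotE_mul, ← slotE_add]
    exact congrArg (slotE π i) (LinearMap.ext fun m ↦ leibniz_lie x y m)
  · rw [zero_add, (commute_slotE hij _ _).eq]

variable [Fintype ι]

lemma sum_slotE_toEnd_mul (x y : L) :
    (∑ i, slotE π i (toEnd ℂ L (π i) x)) * ∑ j, slotE π j (toEnd ℂ L (π j) y) =
      ∑ i, slotE π i (toEnd ℂ L (π i) ⁅x, y⁆) +
        (∑ j, slotE π j (toEnd ℂ L (π j) y)) * ∑ i, slotE π i (toEnd ℂ L (π i) x) := by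
  simp_rw [Finset.sum_mul_sum, slotE_toEnd_mul x y, Finset.sum_add_distrib, Finset.sum_ite_eq,
    Finset.mem_univ, if_true]
  rw [Finset.sum_comm (f := fun i j ↦ slotE π j _ * slotE π i _)]

/-- The diagonal action of a Lie algebra on a tensor product of Lie modules. -/
noncomputable instance instLieRingModulePiTensorProduct : LieRingModule L (⨂[ℂ] j, π j) where
  bracket x u := (∑ j, slotE π j (toEnd ℂ L (π j) x)) u
  add_lie x y u := by
    simp only [map_add, slotE_add, Finset.sum_add_distrib, LinearMap.add_apply]
  lie_add x u w := map_add _ u w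
  leibniz_lie x y u := DFunLike.congr_fun (sum_slotE_toEnd_mul x y) u

lemma lie_eq_sum_slotE (x : L) (u : ⨂[ℂ] j, π j) :
    ⁅x, u⁆ = (∑ j, slotE π j (toEnd ℂ L (π j) x)) u := rfl

instance instLieModulePiTensorProduct : LieModule ℂ L (⨂[ℂ] j, π j) where
  smul_lie c x u := by
    simp only [lie_eq_sum_slotE, map_smul, slotE_smul, ← Finset.smul_sum, LinearMap.smul_apply]
  lie_smul c x u := map_smul _ c u

lemma monAct_zero_apply (z : ι → ℂ) (x : L) (u : ⨂[ℂ] j, π j) :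
    monAct π (fun i x ↦ toEnd ℂ L (π i) x) z 0 x u = ⁅x, u⁆ := by
  simp only [monAct, pow_zero, one_smul, lie_eq_sum_slotE]

end Diagonal

section Cyclicity

variable {ι : Type} [DecidableEq ι]
  {π : ι → Type} [∀ i, AddCommGroup (π i)] [∀ i, Module ℂ (π i)]

lemma eq_top_of_slotE_mem [Finite ι] {L : Type} [LieRing L] [LieAlgebra ℂ L]
    [∀ i, LieRingModule L (π i)] [∀ i, LieModule ℂ L (π i)] {v : ∀ i, π i}
    (hcyc : ∀ i, ∀ N : LieSubmodule ℂ L (π i), v i ∈ N → N = ⊤)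
    {W : Submodule ℂ (⨂[ℂ] j, π j)} (hv : PiTensorProduct.tprod ℂ v ∈ W)
    (hW : ∀ i (x : L), ∀ u ∈ W, slotE π i (LieModule.toEnd ℂ L (π i) x) u ∈ W) : W = ⊤ := by
  cases nonempty_fintype ι
  have piecewise_mem (s : Finset ι) (m : ∀ i, π i) :
      PiTensorProduct.tprod ℂ (s.piecewise m v) ∈ W := by
    induction s using Finset.induction_on with
    | empty => rwa [Finset.piecewise_empty]
    | insert i s his ih =>
      let N : LieSubmodule ℂ L (π i) :=
        { W.comap ((PiTensorProduct.tprod ℂ).toLinearMap (s.piecewise m v) i) with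
          lie_mem := fun {x y} hy ↦ by
            have slot_mem := hW i x _ hy
            rwa [MultilinearMap.toLinearMap_apply, slotE_tprod, Function.update_self,
              Function.update_idem] at slot_mem }
      have v_mem_N : v i ∈ N := by
        change PiTensorProduct.tprod ℂ (Function.update (s.piecewise m v) i (v i)) ∈ W
        rwa [← Finset.piecewise_eq_of_notMem s m v his, Function.update_eq_self]
      rw [Finset.piecewise_insert]
      exact (hcyc i N v_mem_N ▸ LieSubmodule.mem_top (m i) : m i ∈ N)
  rw [← top_le_iff, ← PiTensorProduct.span_tprod_eq_top, Submodule.span_le]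
  rintro _ ⟨m, rfl⟩
  rw [← Finset.piecewise_univ m v]
  exact piecewise_mem Finset.univ m

variable [Fintype ι] {L : Type} {ρ : ∀ i, L → Module.End ℂ (π i)}

lemma polyAct_eq_sum_monAct (z : ι → ℂ) (p : Polynomial ℂ) (x : L) :
    polyAct π ρ z p x = p.sum fun k a ↦ a • monAct π ρ z k x := by
  simp only [polyAct, monAct, Polynomial.eval_eq_sum, Polynomial.sum_def, Finset.sum_smul,
    Finset.smul_sum, mul_smul]
  exact Finset.sum_comm

lemma polyAct_lagrangeBasis {z : ι → ℂ} (hz : Function.Injective z) (i : ι) (x : L) :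
    polyAct π ρ z (Lagrange.basis Finset.univ z i) x = slotE π i (ρ i x) := by
  rw [polyAct, Finset.sum_eq_single i]
  · rw [Lagrange.eval_basis_self hz.injOn (Finset.mem_univ i), one_smul]
  · intro j _ hji
    rw [Lagrange.eval_basis_of_ne hji.symm (Finset.mem_univ j), zero_smul]
  · exact fun hi ↦ absurd (Finset.mem_univ i) hi

lemma slotE_mem_of_monAct_mem {z : ι → ℂ} (hz : Function.Injective z)
    {W : Submodule ℂ (⨂[ℂ] j, π j)} (hW : ∀ k (x : L), ∀ u ∈ W, monAct π ρ z k x u ∈ W)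
    (i : ι) (x : L) {u : ⨂[ℂ] j, π j} (hu : u ∈ W) : slotE π i (ρ i x) u ∈ W := by
  rw [← polyAct_lagrangeBasis hz, polyAct_eq_sum_monAct, Polynomial.sum_def, LinearMap.sum_apply]
  exact W.sum_mem fun k _ ↦ W.smul_mem _ (hW k x u hu)

lemma monAct_mem_iSup_F {v : ∀ i, π i} {z : ι → ℂ} (k : ℕ) (x : L) {u : ⨂[ℂ] j, π j}
    (hu : u ∈ ⨆ i, F π ρ v z i) : monAct π ρ z k x u ∈ ⨆ i, F π ρ v z i := by
  suffices (⨆ i, F π ρ v z i) ≤ (⨆ i, F π ρ v z i).comap (monAct π ρ z k x) from this hu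
  exact iSup_le fun i w hw ↦ Submodule.mem_iSup_of_mem (i + k) (monAct_mem_F π ρ v k x hw)

theorem iSup_F_eq_top [LieRing L] [LieAlgebra ℂ L]
    [∀ i, LieRingModule L (π i)] [∀ i, LieModule ℂ L (π i)] {v : ∀ i, π i}
    (hcyc : ∀ i, ∀ N : LieSubmodule ℂ L (π i), v i ∈ N → N = ⊤)
    {z : ι → ℂ} (hz : Function.Injective z) :
    ⨆ i, F π (fun i x ↦ LieModule.toEnd ℂ L (π i) x) v z i = ⊤ := by
  refine eq_top_of_slotE_mem hcyc ?_ fun i x u hu ↦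
    slotE_mem_of_monAct_mem (ρ := fun i x ↦ LieModule.toEnd ℂ L (π i) x) hz
      (fun k x u hu ↦ monAct_mem_iSup_F k x hu) i x hu
  exact Submodule.mem_iSup_of_mem 0 (Submodule.subset_span ⟨0, le_rfl, .base⟩)

end Cyclicity

section AssociatedGraded

variable {ι : Type} [Fintype ι] [DecidableEq ι]
  {π : ι → Type} [∀ i, AddCommGroup (π i)] [∀ i, Module ℂ (π i)] {L : Type}

lemma Fprev_monotone (ρ : ∀ i, L → Module.End ℂ (π i)) (v : ∀ i, π i) (z : ι → ℂ) :
    Monotone (Fprev π ρ v z) :=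
  monotone_nat_of_le_succ fun
    | 0 => bot_le
    | n + 1 => F_mono π ρ v z n.le_succ

variable [LieRing L] [LieAlgebra ℂ L] [∀ i, LieRingModule L (π i)] [∀ i, LieModule ℂ L (π i)]

variable (L) in
/-- `Fprev` as a filtration by submodules for the diagonal action, indexed so that the quotient of
step `i + 1` by step `i` is the graded piece `gr … i`. -/
noncomputable def lieFprev (v : ∀ i, π i) (z : ι → ℂ) (i : ℕ) :
    LieSubmodule ℂ L (⨂[ℂ] j, π j) :=
  { Fprev π (fun i x ↦ LieModule.toEnd ℂ L (π i) x) v z i with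
    lie_mem := fun {x u} hu ↦ by
      rw [← monAct_zero_apply z]
      exact monAct_mem_Fprev π _ v 0 x hu }

lemma iSup_lieFprev_eq_top {v : ∀ i, π i}
    (hcyc : ∀ i, ∀ N : LieSubmodule ℂ L (π i), v i ∈ N → N = ⊤)
    {z : ι → ℂ} (hz : Function.Injective z) : ⨆ i, lieFprev L v z i = ⊤ := by
  rw [← LieSubmodule.iSup_toSubmodule_eq_top, ← top_le_iff, ← iSup_F_eq_top hcyc hz]
  exact iSup_le fun i ↦ le_iSup (fun i ↦ (lieFprev L v z i).toSubmodule) (i + 1)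

lemma grMap_zero_eq_lie (v : ∀ i, π i) (z : ι → ℂ) (x : L) (i : ℕ)
    (u : lieFprev L v z (i + 1) ⧸ (lieFprev L v z i).comap (lieFprev L v z (i + 1)).incl) :
    grMap π (fun i x ↦ LieModule.toEnd ℂ L (π i) x) v z 0 x i u = ⁅x, u⁆ := by
  obtain ⟨w, rfl⟩ := Submodule.Quotient.mk_surjective _ u
  exact congrArg Submodule.Quotient.mk (Subtype.ext (monAct_zero_apply z x w.1))

end AssociatedGraded

end Fusion

open Fusion DirectSum in
theorem associated_graded_iso_tensor_product_general
    {L : Type} [LieRing L] [LieAlgebra ℂ L] [LieAlgebra.IsSemisimple ℂ L]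
    {ι : Type} [Fintype ι] [DecidableEq ι]
    (π : ι → Type) [∀ i, AddCommGroup (π i)] [∀ i, Module ℂ (π i)]
    [∀ i, LieRingModule L (π i)] [∀ i, LieModule ℂ L (π i)] [∀ i, FiniteDimensional ℂ (π i)]
    (v : ∀ i, π i) (hcyc : ∀ i, ∀ N : LieSubmodule ℂ L (π i), v i ∈ N → N = ⊤)
    (z : ι → ℂ) (hz : Function.Injective z) :
    ∃ φ : (⨁ i : ℕ, gr π (fun i x ↦ LieModule.toEnd ℂ L (π i) x) v z i) ≃ₗ[ℂ] ⨂[ℂ] i, π i,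
      ∀ (x : L) (i : ℕ) (u : gr π (fun i x ↦ LieModule.toEnd ℂ L (π i) x) v z i),
        φ (lof ℂ ℕ (fun j ↦ gr π (fun i x ↦ LieModule.toEnd ℂ L (π i) x) v z j) i
            (grMap π (fun i x ↦ LieModule.toEnd ℂ L (π i) x) v z 0 x i u)) =
          (∑ j, slotE π j (LieModule.toEnd ℂ L (π j) x))
            (φ (lof ℂ ℕ (fun j ↦ gr π (fun i x ↦ LieModule.toEnd ℂ L (π i) x) v z j) i u)) := by
  obtain ⟨φ⟩ := nonempty_lieModuleEquiv_directSum_quotient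
    (Fprev_monotone (fun i x ↦ LieModule.toEnd ℂ L (π i) x) v z : Monotone (lieFprev L v z))
    (LieSubmodule.toSubmodule_injective rfl) (iSup_lieFprev_eq_top hcyc hz)
  have map_lie_lof (x : L) (i : ℕ)
      (u : lieFprev L v z (i + 1) ⧸ (lieFprev L v z i).comap (lieFprev L v z (i + 1)).incl) :
      φ (lof ℂ ℕ _ i ⁅x, u⁆) = ⁅x, φ (lof ℂ ℕ _ i u)⁆ :=
    (congrArg φ ((lieModuleOf ℂ ℕ L _ i).map_lie x u)).trans (φ.toLieModuleHom.map_lie x _)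
  refine ⟨φ.toLinearEquiv, fun x i u ↦ ?_⟩
  rw [grMap_zero_eq_lie v z x i u]
  exact map_lie_lof x i u

open Fusion DirectSum in
/-- For a simple Lie algebra `𝔤`, the associated graded space
`⊕ᵢ Fⁱ_Z/Fⁱ⁻¹_Z` of the filtered tensor product, with `𝔤` acting via the maps induced by the
elements `1 ⊗ x`, is isomorphic as a `𝔤`-module to `π₁ ⊗ ⋯ ⊗ πₙ` with the diagonal action. -/
theorem associated_graded_iso_tensor_product
    {L : Type} [LieRing L] [LieAlgebra ℂ L] [LieAlgebra.IsSimple ℂ L]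
    [FiniteDimensional ℂ L]
    (n : ℕ) (π : Fin n → Type) [∀ i, AddCommGroup (π i)] [∀ i, Module ℂ (π i)]
    [∀ i, LieRingModule L (π i)] [∀ i, LieModule ℂ L (π i)]
    [∀ i, FiniteDimensional ℂ (π i)]
    (v : ∀ i, π i)
    (hcyc : ∀ i, ∀ N : LieSubmodule ℂ L (π i), v i ∈ N → N = ⊤)
    (z : Fin n → ℂ) (hz : Function.Injective z) :
    ∃ φ : (⨁ i : ℕ, gr π (fun i x => LieModule.toEnd ℂ L (π i) x) v z i) ≃ₗ[ℂ]
        ⨂[ℂ] i, π i,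
      ∀ (x : L) (i : ℕ) (u : gr π (fun i x => LieModule.toEnd ℂ L (π i) x) v z i),
        φ (DirectSum.lof ℂ ℕ (fun j => gr π (fun i x => LieModule.toEnd ℂ L (π i) x) v z j) i
            (grMap π (fun i x => LieModule.toEnd ℂ L (π i) x) v z 0 x i u)) =
          (∑ j, slotE π j (LieModule.toEnd ℂ L (π j) x))
            (φ (DirectSum.lof ℂ ℕ
              (fun j => gr π (fun i x => LieModule.toEnd ℂ L (π i) x) v z j) i u)) := by
  exact associated_graded_iso_tensor_product_general π v hcyc z hz
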